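/- Let S be the group with presentation ⟨x, {u_k, v_k}_{k∈N} | x³ = u_k^{3^k} = v_k^{3^k} = 1, u_{k+1}³ = u_k, v_{k+1}³ = v_k, [u_k,x] = v_k, [v_k,x] = (u_k v_k)^{-3}, [u_k,v_k] = 1⟩, an extension of Z/3 by T = (Z(3^∞))². Then the center of S is the cyclic group of order 3 generated by v_1. -/

import Mathlib

/-- Generators of the discrete 3-toral group `S`: `x` and `u_k`, `v_k` for `k ∈ ℕ`. -/
inductive SGen
  | x : SGen
  | u : ℕ → SGen
  | v : ℕ → SGen

namespace SGen

def X : FreeGroup SGen := FreeGroup.of SGen.x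
def U (k : ℕ) : FreeGroup SGen := FreeGroup.of (SGen.u k)
def V (k : ℕ) : FreeGroup SGen := FreeGroup.of (SGen.v k)

/-- The relations of the presentation
`⟨x, {u_k, v_k} | x³ = u_k^{3^k} = v_k^{3^k} = 1, u_{k+1}³ = u_k, v_{k+1}³ = v_k,
[u_k,x] = v_k, [v_k,x] = (u_k v_k)^{-3}, [u_k,v_k] = 1⟩`,
where `[a,b] = a⁻¹b⁻¹ab`. -/
def SRels : Set (FreeGroup SGen) :=
  {g | g = X ^ 3 ∨ ∃ k : ℕ,
    g = U k ^ 3 ^ k ∨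
    g = V k ^ 3 ^ k ∨
    g = U (k + 1) ^ 3 * (U k)⁻¹ ∨
    g = V (k + 1) ^ 3 * (V k)⁻¹ ∨
    g = (U k)⁻¹ * X⁻¹ * U k * X * (V k)⁻¹ ∨
    g = (V k)⁻¹ * X⁻¹ * V k * X * (U k * V k) ^ 3 ∨
    g = (U k)⁻¹ * (V k)⁻¹ * U k * V k}

/-- The discrete `3`-toral group `S` of rank 2, an extension of `ℤ/3` by
`T = (ℤ(3^∞))²`, given by the above presentation. -/
def SGroup : Type := PresentedGroup SRels

instance : Group SGroup := by unfold SGroup; infer_instance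

end SGen

namespace SCenter

section normalform
variable {G : Type*} [Group G] (x : G) (u v : ℕ → G)

theorem pow_up (w : ℕ → G) (h : ∀ k, w (k + 1) ^ 3 = w k) (k d : ℕ) :
    w (k + d) ^ 3 ^ d = w k := by
  induction d with
  | zero => simp
  | succ d ih => rw [← ih, ← h (k + d), ← pow_mul, pow_succ', add_assoc]

/-- A normal form for elements of the torus. -/
def InT (u v : ℕ → G) (t : G) : Prop := ∃ k : ℕ, ∃ a b : ℤ, t = u k ^ a * v k ^ b

theorem InT.lift {u v : ℕ → G} (hu : ∀ k, u (k + 1) ^ 3 = u k) (hv : ∀ k, v (k + 1) ^ 3 = v k)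
    {t : G} {k : ℕ} {a b : ℤ} (h : t = u k ^ a * v k ^ b) (d : ℕ) :
    ∃ a' b' : ℤ, t = u (k + d) ^ a' * v (k + d) ^ b' := by
  refine ⟨3 ^ d * a, 3 ^ d * b, ?_⟩
  rw [h, zpow_mul, zpow_mul, ← pow_up u hu k d, ← pow_up v hv k d]
  norm_cast

theorem InT.mul {u v : ℕ → G} (hu : ∀ k, u (k + 1) ^ 3 = u k) (hv : ∀ k, v (k + 1) ^ 3 = v k)
    (hc : ∀ k, Commute (u k) (v k)) {s t : G} (hs : InT u v s) (ht : InT u v t) :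
    InT u v (s * t) := by
  obtain ⟨k, a, b, h1⟩ := hs
  obtain ⟨l, c, d, h2⟩ := ht
  obtain ⟨a, b, h1⟩ := InT.lift hu hv h1 l
  obtain ⟨c, d, h2⟩ := InT.lift hu hv h2 k
  rw [add_comm l k] at h2
  refine ⟨k + l, a + c, b + d, ?_⟩
  have := ((hc (k + l)).zpow_zpow c b).eq
  rw [h1, h2, zpow_add, zpow_add, mul_assoc, mul_assoc, ← mul_assoc (v _ ^ b), ← this]
  simp only [mul_assoc]

theorem InT.conj {u v : ℕ → G} {x : G} (hc : ∀ k, Commute (u k) (v k))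
    (hux : ∀ k, x⁻¹ * u k * x = u k * v k)
    (hvx : ∀ k, x⁻¹ * v k * x = v k * ((u k * v k) ^ 3)⁻¹) {t : G} (ht : InT u v t) :
    InT u v (x⁻¹ * t * x) := by
  obtain ⟨k, a, b, rfl⟩ := ht
  refine ⟨k, a - 3 * b, a - 2 * b, ?_⟩
  have key : ∀ g : G, ∀ n : ℤ, x⁻¹ * g ^ n * x = (x⁻¹ * g * x) ^ n := by
    intro g n
    have := (conj_zpow (a := x⁻¹) (b := g) (i := n))
    simpa using this.symm
  have hC := hc k
  have e : v k * ((u k * v k) ^ 3)⁻¹ = u k ^ (-3 : ℤ) * v k ^ (-2 : ℤ) := by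
    rw [hC.mul_pow, (hC.pow_pow 3 3).eq, mul_inv_rev, ← mul_assoc]
    have h1 : (u k ^ 3)⁻¹ = u k ^ (-3 : ℤ) := by rw [zpow_neg]; norm_cast
    have h2 : (v k ^ 3)⁻¹ = v k ^ (-3 : ℤ) := by rw [zpow_neg]; norm_cast
    rw [h1, h2]
    have := (hC.zpow_left (-3)).eq
    rw [← this, mul_assoc, ← zpow_one_add]
    norm_num
  calc x⁻¹ * (u k ^ a * v k ^ b) * x
      = (x⁻¹ * u k ^ a * x) * (x⁻¹ * v k ^ b * x) := by group
    _ = (u k * v k) ^ a * (u k ^ (-3 : ℤ) * v k ^ (-2 : ℤ)) ^ b := by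
        rw [key, key, hux, hvx, e]
    _ = u k ^ a * (v k ^ a * u k ^ (-3 * b)) * v k ^ (-2 * b) := by
        rw [hC.mul_zpow, (hC.zpow_zpow _ _).mul_zpow, ← zpow_mul, ← zpow_mul]
        simp only [mul_assoc]
    _ = _ := by
        rw [← (hC.zpow_zpow _ _).eq, ← mul_assoc, ← zpow_add, mul_assoc, ← zpow_add]
        congr 2 <;> ring

theorem normal_form {u v : ℕ → G} {x : G}
    (hx : x ^ 3 = 1) (hu : ∀ k, u (k + 1) ^ 3 = u k) (hv : ∀ k, v (k + 1) ^ 3 = v k)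
    (hc : ∀ k, Commute (u k) (v k))
    (hux : ∀ k, x⁻¹ * u k * x = u k * v k)
    (hvx : ∀ k, x⁻¹ * v k * x = v k * ((u k * v k) ^ 3)⁻¹)
    (hgen : ∀ H : Subgroup G, x ∈ H → (∀ k, u k ∈ H) → (∀ k, v k ∈ H) → H = ⊤) (g : G) :
    ∃ i : ℕ, i < 3 ∧ ∃ t, InT u v t ∧ g = x ^ i * t := by
  have conjZ : ∀ i : ℕ, ∀ t, InT u v t → InT u v ((x ^ i)⁻¹ * t * x ^ i) := by
    intro i
    induction i with
    | zero => intro t ht; simpa using ht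
    | succ i ih =>
      intro t ht
      have := InT.conj hc hux hvx (ih t ht)
      convert this using 1
      rw [pow_succ]; group
  have xinv : ∀ i : ℕ, (x ^ i)⁻¹ = x ^ (2 * i) := by
    intro i
    rw [inv_eq_iff_mul_eq_one, ← pow_add, show i + 2 * i = 3 * i by ring, pow_mul, hx, one_pow]
  have invT : ∀ t, InT u v t → InT u v t⁻¹ := by
    rintro t ⟨k, a, b, rfl⟩
    refine ⟨k, -a, -b, ?_⟩
    rw [((hc k).zpow_zpow a b).eq, mul_inv_rev, zpow_neg, zpow_neg]
  let H : Subgroup G :=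
    { carrier := {g | ∃ i : ℕ, ∃ t, InT u v t ∧ g = x ^ i * t}
      one_mem' := ⟨0, 1, ⟨0, 0, 0, by simp⟩, by simp⟩
      mul_mem' := by
        rintro _ _ ⟨i, s, hs, rfl⟩ ⟨j, t, ht, rfl⟩
        refine ⟨i + j, _, InT.mul hu hv hc (conjZ j s hs) ht, ?_⟩
        rw [pow_add]; group
      inv_mem' := by
        rintro _ ⟨i, s, hs, rfl⟩
        refine ⟨2 * i, _, conjZ (2 * i) _ (invT s hs), ?_⟩
        rw [mul_inv_rev, xinv]; group }
  have hH : H = ⊤ := by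
    apply hgen
    · exact ⟨1, 1, ⟨0, 0, 0, by simp⟩, by simp⟩
    · intro k; exact ⟨0, u k, ⟨k, 1, 0, by simp⟩, by simp⟩
    · intro k; exact ⟨0, v k, ⟨k, 0, 1, by simp⟩, by simp⟩
  have hg : g ∈ H := by rw [hH]; trivial
  obtain ⟨i, t, ht, rfl⟩ := hg
  refine ⟨i % 3, Nat.mod_lt _ (by norm_num), t, ht, ?_⟩
  congr 1
  conv_lhs => rw [← Nat.div_add_mod i 3, pow_add, pow_mul, hx, one_pow, one_mul]

end normalform

/-! ### An affine model -/

abbrev A := AddCircle (1 : ℚ)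

def c (k : ℕ) : A := (((1 : ℚ) / 3 ^ k : ℚ) : A)

theorem c_zero : c 0 = 0 := by
  simp [c]

theorem c_succ (k : ℕ) : 3 • c (k + 1) = c k := by
  unfold c
  rw [← AddCircle.coe_nsmul]
  congr 1
  rw [pow_succ, nsmul_eq_mul]; push_cast; field_simp

theorem c_pow (k : ℕ) : 3 ^ k • c k = 0 := by
  unfold c
  rw [← AddCircle.coe_nsmul, nsmul_eq_mul]
  push_cast
  rw [mul_one_div_cancel (by positivity)]
  exact AddCircle.coe_period (1 : ℚ)

theorem c_dvd (k : ℕ) (a : ℤ) (h : a • c k = 0) : (3 : ℤ) ^ k ∣ a := by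
  unfold c at h
  rw [← AddCircle.coe_zsmul, AddCircle.coe_eq_zero_iff] at h
  obtain ⟨n, hn⟩ := h
  refine ⟨n, ?_⟩
  simp only [zsmul_eq_mul, mul_one] at hn
  have h3 : ((3 : ℚ) ^ k) ≠ 0 := by positivity
  field_simp at hn
  rw [mul_comm]
  exact_mod_cast hn.symm

theorem c_one_ne : c 1 ≠ 0 := by
  intro h
  have := c_dvd 1 1 (by simpa using h)
  norm_num at this

/-- inverse of the conjugation action of `x`. -/
def mx : Equiv.Perm (A × A) where
  toFun p := (-2 • p.1 + 3 • p.2, -p.1 + p.2)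
  invFun p := (p.1 - 3 • p.2, p.1 - 2 • p.2)
  left_inv p := by ext <;> simp <;> abel
  right_inv p := by ext <;> simp <;> abel

def gen : SGen → Equiv.Perm (A × A)
  | SGen.x => mx
  | SGen.u k => Equiv.addRight ((c k, 0) : A × A)
  | SGen.v k => Equiv.addRight ((0, c k) : A × A)

theorem pow_addR {B : Type*} [AddCommGroup B] (w : B) (n : ℕ) :
    Equiv.addRight w ^ n = Equiv.addRight (n • w) := by
  induction n with
  | zero => ext p; simp
  | succ n ih => rw [pow_succ, ih]; ext p; simp [succ_nsmul']

theorem zpow_addR {B : Type*} [AddCommGroup B] (w : B) (n : ℤ) :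
    Equiv.addRight w ^ n = Equiv.addRight (n • w) := by
  obtain ⟨m, rfl | rfl⟩ := n.eq_nat_or_neg
  · rw [zpow_natCast, pow_addR, natCast_zsmul]
  · rw [zpow_neg, zpow_natCast, pow_addR, neg_zsmul, natCast_zsmul]
    rw [inv_eq_iff_mul_eq_one]
    ext p; simp

open SGen in
theorem gen_rel : ∀ r ∈ SRels, FreeGroup.lift gen r = 1 := by
  rintro r (rfl | ⟨k, rfl | rfl | rfl | rfl | rfl | rfl | rfl⟩)
  · ext p <;> simp [X, gen, mx, pow_succ] <;> abel
  · simp only [U, map_pow, FreeGroup.lift_apply_of, gen, pow_addR]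
    ext p <;> simp [c_pow]
  · simp only [V, map_pow, FreeGroup.lift_apply_of, gen, pow_addR]
    ext p <;> simp [c_pow]
  · simp only [U, map_pow, map_mul, map_inv, FreeGroup.lift_apply_of, gen, pow_addR]
    rw [mul_inv_eq_one]
    ext p <;> simp [c_succ]
  · simp only [V, map_pow, map_mul, map_inv, FreeGroup.lift_apply_of, gen, pow_addR]
    rw [mul_inv_eq_one]
    ext p <;> simp [c_succ]
  · simp only [U, V, X, map_pow, map_mul, map_inv, FreeGroup.lift_apply_of, gen]
    rw [mul_inv_eq_one, mul_assoc, mul_assoc, inv_mul_eq_iff_eq_mul, inv_mul_eq_iff_eq_mul]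
    ext p <;> simp [mx] <;> abel
  · simp only [U, V, X, map_pow, map_mul, map_inv, FreeGroup.lift_apply_of, gen]
    rw [mul_assoc, mul_assoc, mul_assoc, inv_mul_eq_iff_eq_mul, inv_mul_eq_iff_eq_mul, mul_one]
    ext p <;> simp [mx, pow_succ] <;> abel
  · simp only [U, V, X, map_pow, map_mul, map_inv, FreeGroup.lift_apply_of, gen]
    rw [mul_assoc, mul_assoc, inv_mul_eq_iff_eq_mul, inv_mul_eq_iff_eq_mul, mul_one]
    ext p <;> simp

abbrev P := PresentedGroup SGen.SRels
abbrev o (s : SGen) : P := PresentedGroup.of (rels := SGen.SRels) s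

def F : P →* Equiv.Perm (A × A) := PresentedGroup.toGroup gen_rel

theorem F_o (s : SGen) : F (o s) = gen s := PresentedGroup.toGroup.of gen_rel

theorem mk_rel {r : FreeGroup SGen} (h : r ∈ SGen.SRels) :
    PresentedGroup.mk SGen.SRels r = 1 := PresentedGroup.one_of_mem h

theorem mk_of (s : SGen) : PresentedGroup.mk SGen.SRels (FreeGroup.of s) = o s := rfl

open SGen in
theorem rx : o .x ^ 3 = 1 := by
  have := mk_rel (r := X ^ 3) (Or.inl rfl)
  simpa only [X, map_pow, mk_of] using this

open SGen in
theorem rv3 (k : ℕ) : o (.v k) ^ 3 ^ k = 1 := by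
  have := mk_rel (r := V k ^ 3 ^ k) (Or.inr ⟨k, by tauto⟩)
  simpa only [V, map_pow, mk_of] using this

open SGen in
theorem ru3 (k : ℕ) : o (.u k) ^ 3 ^ k = 1 := by
  have := mk_rel (r := U k ^ 3 ^ k) (Or.inr ⟨k, by tauto⟩)
  simpa only [U, map_pow, mk_of] using this

open SGen in
theorem rus (k : ℕ) : o (.u (k + 1)) ^ 3 = o (.u k) := by
  have := mk_rel (r := U (k + 1) ^ 3 * (U k)⁻¹) (Or.inr ⟨k, by tauto⟩)
  simp only [U, map_pow, map_mul, map_inv, mk_of] at this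
  exact mul_inv_eq_one.1 this

open SGen in
theorem rvs (k : ℕ) : o (.v (k + 1)) ^ 3 = o (.v k) := by
  have := mk_rel (r := V (k + 1) ^ 3 * (V k)⁻¹) (Or.inr ⟨k, by tauto⟩)
  simp only [V, map_pow, map_mul, map_inv, mk_of] at this
  exact mul_inv_eq_one.1 this

open SGen in
theorem rux (k : ℕ) : (o .x)⁻¹ * o (.u k) * o .x = o (.u k) * o (.v k) := by
  have := mk_rel (r := (U k)⁻¹ * X⁻¹ * U k * X * (V k)⁻¹) (Or.inr ⟨k, by tauto⟩)
  simp only [X, U, V, map_pow, map_mul, map_inv, mk_of] at this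
  rw [mul_inv_eq_one] at this
  rw [← this]; group

open SGen in
theorem rvx (k : ℕ) : (o .x)⁻¹ * o (.v k) * o .x
    = o (.v k) * ((o (.u k) * o (.v k)) ^ 3)⁻¹ := by
  have := mk_rel (r := (V k)⁻¹ * X⁻¹ * V k * X * (U k * V k) ^ 3) (Or.inr ⟨k, by tauto⟩)
  simp only [X, U, V, map_pow, map_mul, map_inv, mk_of] at this
  rw [mul_eq_one_iff_eq_inv] at this
  rw [← this]; group

open SGen in
theorem ruv (k : ℕ) : Commute (o (.u k)) (o (.v k)) := by
  have := mk_rel (r := (U k)⁻¹ * (V k)⁻¹ * U k * V k) (Or.inr ⟨k, by tauto⟩)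
  simp only [U, V, map_pow, map_mul, map_inv, mk_of] at this
  rw [mul_assoc, mul_assoc, inv_mul_eq_iff_eq_mul, inv_mul_eq_iff_eq_mul, mul_one] at this
  exact this

theorem gen_top (H : Subgroup P) (hx : o .x ∈ H) (hu : ∀ k, o (.u k) ∈ H)
    (hv : ∀ k, o (.v k) ∈ H) : H = ⊤ := by
  rw [eq_top_iff, ← PresentedGroup.closure_range_of, Subgroup.closure_le]
  rintro _ ⟨s, rfl⟩
  cases s with
  | x => exact hx
  | u k => exact hu k
  | v k => exact hv k

theorem nf (g : P) : ∃ i : ℕ, i < 3 ∧ ∃ t,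
    InT (fun k => o (.u k)) (fun k => o (.v k)) t ∧ g = o .x ^ i * t :=
  normal_form rx rus rvs ruv rux rvx gen_top g

theorem order_v1 : orderOf (o (.v 1)) = 3 := by
  apply orderOf_eq_prime
  · simpa using rv3 1
  · intro h
    have h2 := F_o (.v 1)
    rw [h, map_one] at h2
    have h3 := congrArg (fun e : Equiv.Perm (A × A) => (e 0).2) h2
    simp [gen] at h3
    exact c_one_ne h3.symm

theorem v1_up (k : ℕ) : o (.v (k + 1)) ^ 3 ^ k = o (.v 1) := by
  have := pow_up (fun k => o (.v k)) rvs 1 k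
  rwa [add_comm 1 k] at this

theorem u1_one : o (.u 0) = 1 := by simpa using ru3 0

theorem v1_central : o (.v 1) ∈ Subgroup.center P := by
  suffices h : Subgroup.centralizer {o (.v 1)} = ⊤ by
    rw [Subgroup.mem_center_iff]
    intro g
    have hg : g ∈ Subgroup.centralizer {o (.v 1)} := by rw [h]; trivial
    exact (Subgroup.mem_centralizer_singleton_iff.1 hg)
  have hvv : ∀ k l, o (.v (k + l)) ^ 3 ^ l = o (.v k) :=
    fun k l => pow_up (fun k => o (.v k)) rvs k l
  have huu : ∀ k l, o (.u (k + l)) ^ 3 ^ l = o (.u k) :=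
    fun k l => pow_up (fun k => o (.u k)) rus k l
  apply gen_top
  · rw [Subgroup.mem_centralizer_singleton_iff]
    have h := rvx 1
    have hu1 : o (.u 1) ^ 3 = 1 := by simpa using ru3 1
    have hv1 : o (.v 1) ^ 3 = 1 := by simpa using rv3 1
    rw [(ruv 1).mul_pow, hu1, hv1, mul_one, inv_one, mul_one, mul_assoc,
      inv_mul_eq_iff_eq_mul] at h
    exact h.symm
  · intro k
    rw [Subgroup.mem_centralizer_singleton_iff]
    have h : Commute (o (.u k)) (o (.v 1)) := by
      rw [← huu k 1, ← hvv 1 k, add_comm 1 k]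
      exact (ruv (k + 1)).pow_pow _ _
    exact h
  · intro k
    rw [Subgroup.mem_centralizer_singleton_iff]
    have h : Commute (o (.v k)) (o (.v 1)) := by
      rw [← hvv k 1, ← hvv 1 k, add_comm 1 k]
      exact (Commute.refl _).pow_pow _ _
    exact h

theorem center_sub (g : P) (hg : g ∈ Subgroup.center P) : g ∈ Subgroup.zpowers (o (.v 1)) := by
  rw [Subgroup.mem_center_iff] at hg
  obtain ⟨i, hi, t, ⟨k, a, b, rfl⟩, rfl⟩ := nf g
  have hx := congrArg F (hg (o .x))
  have hu := congrArg F (hg (o (.u 1)))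
  simp only [map_mul, map_pow, map_zpow, F_o, gen, zpow_addR] at hx hu
  have hx0 := congrArg (fun e : Equiv.Perm (A × A) => e 0) hx
  have hu0 := congrArg (fun e : Equiv.Perm (A × A) => e 0) hu
  have m0 : mx 0 = 0 := by simp [mx]
  simp only [Equiv.Perm.mul_apply, Equiv.coe_addRight, m0, zero_add] at hx0 hu0
  have fix : mx (a • c k, b • c k) = (a • c k, b • c k) := by
    have h : (mx ^ i) (mx (a • c k, b • c k)) = (mx ^ i) (a • c k, b • c k) := by
      rw [← Equiv.Perm.mul_apply, ← pow_succ, pow_succ', Equiv.Perm.mul_apply]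
      simpa using hx0
    exact (mx ^ i).injective h
  have hi0 : i = 0 := by
    by_contra hne
    have h3 := congrArg Prod.snd hu0
    have hcc : i = 1 ∨ i = 2 := by omega
    rcases hcc with rfl | rfl
    · simp [mx] at h3
      apply c_one_ne
      grind
    · simp [mx, pow_succ] at h3
      apply c_one_ne
      grind
  subst hi0
  simp only [mx, Equiv.coe_fn_mk, Prod.mk.injEq] at fix
  obtain ⟨f1, f2⟩ := fix
  have ha : a • c k = 0 := by
    rw [neg_add_eq_iff_eq_add] at f2
    exact left_eq_add.1 (by rw [add_comm] at f2; exact f2) 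
  have hb : (3 * b) • c k = 0 := by
    rw [ha] at f1
    rw [mul_smul, ofNat_zsmul]
    simpa using f1
  have da := c_dvd k a ha
  have db := c_dvd k _ hb
  have e1 : o (.u k) ^ a = 1 := by
    obtain ⟨n, rfl⟩ := da
    have := ru3 k
    rw [zpow_mul]
    have h : o (.u k) ^ ((3 : ℤ) ^ k) = 1 := by exact_mod_cast this
    rw [h, one_zpow]
  simp only [pow_zero, one_mul, e1]
  cases k with
  | zero =>
    have : o (.v 0) = 1 := by simpa using rv3 0
    rw [this, one_zpow]; exact one_mem _
  | succ k =>
    rw [pow_succ', mul_dvd_mul_iff_left (by norm_num)] at db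
    obtain ⟨n, rfl⟩ := db
    refine ⟨n, ?_⟩
    have h : o (.v (k + 1)) ^ ((3 : ℤ) ^ k) = o (.v 1) := by exact_mod_cast v1_up k
    simp only [zpow_mul, h]

theorem main : Subgroup.center P = Subgroup.zpowers (o (.v 1)) ∧ orderOf (o (.v 1)) = 3 := by
  refine ⟨le_antisymm center_sub ?_, order_v1⟩
  rw [Subgroup.zpowers_le]
  exact v1_central

end SCenter

/-- The center of `S` is the cyclic group of order 3 generated by `v₁`. -/
theorem SGroup_center :
    Subgroup.center SGen.SGroup =
      Subgroup.zpowers (PresentedGroup.of (rels := SGen.SRels) (SGen.v 1)) ∧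
    orderOf (PresentedGroup.of (rels := SGen.SRels) (SGen.v 1)) = 3 := by
  exact SCenter.main
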